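/- (Calderón–Vaillancourt theorem, Weyl quantization form.) Let a : ℝ^{2n} → ℂ be a smooth function such that every partial derivative ∂^α a (α ∈ ℕ^{2n}, including α = 0) is bounded on ℝ^{2n}. Then there exists a constant C > 0 such that for all Schwartz functions u, v ∈ S(ℝⁿ, ℂ), |∫_{ℝ^{2n}} a(x,ξ) · W(u,v)(x,ξ) dx dξ| ≤ C · ‖u‖_{L²(ℝⁿ)} · ‖v‖_{L²(ℝⁿ)}; that is, the Weyl operator Op(a) extends to a bounded linear operator on L²(ℝⁿ). -/

import Mathlib

open MeasureTheory

noncomputable section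

/-- Euclidean scalar product on `ℝⁿ`. -/
def dotn {n : ℕ} (p q : Fin n → ℝ) : ℝ := ∑ i, p i * q i

/-- The standard basis vector of `ℝ^{2n} = ℝⁿ × ℝⁿ` indexed by `i : Fin n ⊕ Fin n`. -/
def stdVec {n : ℕ} (i : Fin n ⊕ Fin n) : (Fin n → ℝ) × (Fin n → ℝ) :=
  Sum.elim (fun j => (Pi.single j 1, 0)) (fun j => (0, Pi.single j 1)) i

/-- The partial derivative of `f : ℝ^{2n} → ℂ` in the `i`-th coordinate direction. -/
def pDeriv {n : ℕ} (i : Fin n ⊕ Fin n)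
    (f : (Fin n → ℝ) × (Fin n → ℝ) → ℂ) : (Fin n → ℝ) × (Fin n → ℝ) → ℂ :=
  fun z => fderiv ℝ f z (stdVec i)

/-- The iterated partial derivative `∂^α f` given by a list of coordinate
directions (`L = []` gives `f` itself). -/
def pDerivList {n : ℕ} (L : List (Fin n ⊕ Fin n))
    (f : (Fin n → ℝ) × (Fin n → ℝ) → ℂ) : (Fin n → ℝ) × (Fin n → ℝ) → ℂ :=
  L.foldr (fun i g => pDeriv i g) f

/-- The Wigner transform
`W(u,v)(x,ξ) = (2π)^{−n} ∫ u(x+y/2) conj(v(x−y/2)) e^{−i(y|ξ)} dy`. -/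
def wigner {n : ℕ} (u v : SchwartzMap (Fin n → ℝ) ℂ)
    (z : (Fin n → ℝ) × (Fin n → ℝ)) : ℂ :=
  ((((2 * Real.pi) ^ n)⁻¹ : ℝ) : ℂ) *
    ∫ y : Fin n → ℝ,
      u (z.1 + (2⁻¹ : ℝ) • y) * (starRingEnd ℂ) (v (z.1 - (2⁻¹ : ℝ) • y)) *
        Complex.exp (-Complex.I * ((dotn y z.2 : ℝ) : ℂ))

/-!
Localise the symbol `a` by the translates of a window. Since the derivatives of `a` up to an
order exceeding `dim ℝ²ⁿ` are bounded, the short-time Fourier transform of `a` is dominated,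
uniformly in position, by an integrable function of the frequency. Parseval's formula writes
`∫ a F` as the pairing of this transform with a short-time Fourier transform of `F`, so it suffices
to bound the latter in `L¹` of the position, uniformly in the frequency. For `F = W(u, v)` and a
Gaussian window it factors, up to phases, as the product of the Gabor transforms of `u` and `v` at
two phase space points whose difference depends on the frequency alone; Cauchy–Schwarz and the
Plancherel formula for the Gabor transform bound it by `‖u‖ ‖v‖`.
-/

section PartialDerivatives

variable {n : ℕ}

/-- The coordinate functionals on `ℝ^{2n}`, dual to the basis `stdVec`. -/
def coordCLM (i : Fin n ⊕ Fin n) : ((Fin n → ℝ) × (Fin n → ℝ)) →L[ℝ] ℝ :=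
  Sum.elim
    (fun j => (ContinuousLinearMap.proj j).comp (ContinuousLinearMap.fst ℝ _ _))
    (fun j => (ContinuousLinearMap.proj j).comp (ContinuousLinearMap.snd ℝ _ _)) i

theorem sum_coordCLM_smul_stdVec (z : (Fin n → ℝ) × (Fin n → ℝ)) :
    ∑ i, coordCLM i z • stdVec i = z := by
  simp only [Fintype.sum_sum_type, coordCLM, stdVec, Sum.elim_inl, Sum.elim_inr]
  ext j <;> simp [Prod.fst_sum, Prod.snd_sum, Finset.sum_apply, Pi.single_apply]

theorem fderiv_eq_sum_pDeriv (f : (Fin n → ℝ) × (Fin n → ℝ) → ℂ) :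
    fderiv ℝ f =
      fun z => ∑ i, ContinuousLinearMap.smulRightL ℝ _ ℂ (coordCLM i) (pDeriv i f z) := by
  funext z
  refine ContinuousLinearMap.ext fun w => ?_
  conv_lhs => rw [← sum_coordCLM_smul_stdVec w, map_sum]
  simp [pDeriv]

theorem pDerivList_append_singleton (L : List (Fin n ⊕ Fin n)) (i : Fin n ⊕ Fin n)
    (f : (Fin n → ℝ) × (Fin n → ℝ) → ℂ) :
    pDerivList (L ++ [i]) f = pDerivList L (pDeriv i f) := by
  simp [pDerivList, List.foldr_append]

theorem contDiff_pDeriv {k : ℕ} (i : Fin n ⊕ Fin n) {f : (Fin n → ℝ) × (Fin n → ℝ) → ℂ}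
    (hf : ContDiff ℝ (k + 1 : ℕ) f) : ContDiff ℝ k (pDeriv i f) :=
  (hf.fderiv_right (m := k) (by simp)).clm_apply contDiff_const

theorem exists_norm_iteratedFDeriv_le_of_pDerivList {k : ℕ} {f : (Fin n → ℝ) × (Fin n → ℝ) → ℂ}
    (hf : ContDiff ℝ k f)
    (hbd : ∀ L : List (Fin n ⊕ Fin n), L.length = k → ∃ M : ℝ, ∀ z, ‖pDerivList L f z‖ ≤ M) :
    ∃ M : ℝ, ∀ z, ‖iteratedFDeriv ℝ k f z‖ ≤ M := by
  induction k generalizing f with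
  | zero => simpa [pDerivList] using hbd [] rfl
  | succ k ih =>
    have hpartial : ∀ i, ∃ M : ℝ, ∀ z, ‖iteratedFDeriv ℝ k (pDeriv i f) z‖ ≤ M := fun i =>
      ih (contDiff_pDeriv i hf) fun L hL => by
        simpa [pDerivList_append_singleton] using hbd (L ++ [i]) (by simp [hL])
    choose M hM using hpartial
    refine ⟨∑ i, ‖ContinuousLinearMap.smulRightL ℝ _ ℂ (coordCLM (n := n) i)‖ * M i, fun z => ?_⟩
    have hterm : ∀ i, ContDiff ℝ k fun z =>
        ContinuousLinearMap.smulRightL ℝ _ ℂ (coordCLM i) (pDeriv i f z) := fun i =>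
      (ContinuousLinearMap.contDiff _).comp (contDiff_pDeriv i hf)
    rw [← norm_iteratedFDeriv_fderiv, fderiv_eq_sum_pDeriv,
      iteratedFDeriv_fun_sum_apply fun i _ => (hterm i).contDiffAt]
    refine (norm_sum_le _ _).trans (Finset.sum_le_sum fun i _ => ?_)
    calc _ ≤ _ := ContinuousLinearMap.norm_iteratedFDeriv_comp_left _
          (contDiff_pDeriv i hf).contDiffAt le_rfl
      _ ≤ _ := mul_le_mul_of_nonneg_left (hM i z) (norm_nonneg _)

end PartialDerivatives

section DerivativeBounds

variable {V E : Type*} [NormedAddCommGroup V] [NormedSpace ℝ V]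
  [NormedAddCommGroup E] [NormedSpace ℝ E]

theorem norm_iteratedFDeriv_comp_const_add_clm_le {F : Type*} [NormedAddCommGroup F]
    [NormedSpace ℝ F] {f : E → F} {k : ℕ} (hf : ContDiff ℝ k f) (b : E) (L : V →L[ℝ] E) (y : V) :
    ‖iteratedFDeriv ℝ k (fun y => f (b + L y)) y‖ ≤
      ‖L‖ ^ k * ‖iteratedFDeriv ℝ k f (b + L y)‖ := by
  have hshift : ContDiff ℝ k fun x => f (b + x) := hf.comp (contDiff_const.add contDiff_id)
  rw [show (fun y => f (b + L y)) = (fun x => f (b + x)) ∘ L from rfl,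
    L.iteratedFDeriv_comp_right hshift y le_rfl, iteratedFDeriv_comp_add_left, mul_comm]
  simpa using ContinuousMultilinearMap.norm_compContinuousLinearMap_le
    (iteratedFDeriv ℝ k f (b + L y)) fun _ : Fin k => L

theorem norm_iteratedFDeriv_comp_const_add_smul_le {f : V → E} {k : ℕ} (hf : ContDiff ℝ k f)
    {c : ℝ} (hc : |c| ≤ 1) (x y : V) :
    ‖iteratedFDeriv ℝ k (fun y => f (x + c • y)) y‖ ≤ ‖iteratedFDeriv ℝ k f (x + c • y)‖ := by
  have hnorm : ‖c • ContinuousLinearMap.id ℝ V‖ ≤ 1 :=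
    (norm_smul c (ContinuousLinearMap.id ℝ V)).trans_le
      (mul_le_one₀ hc (norm_nonneg _) ContinuousLinearMap.norm_id_le)
  exact (norm_iteratedFDeriv_comp_const_add_clm_le hf x (c • ContinuousLinearMap.id ℝ V) y).trans
    (mul_le_of_le_one_left (norm_nonneg _) (pow_le_one₀ (norm_nonneg _) hnorm))

theorem norm_iteratedFDeriv_smul_le_of_le {𝕜 : Type*} [NormedField 𝕜] [NormedAlgebra ℝ 𝕜]
    [NormedSpace 𝕜 E] [IsScalarTower ℝ 𝕜 E] {f : V → 𝕜} {g : V → E} {N : ℕ}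
    (hf : ContDiff ℝ N f) (hg : ContDiff ℝ N g) {x : V} {a b : ℝ}
    (hfa : ∀ k ≤ N, ‖iteratedFDeriv ℝ k f x‖ ≤ a) (hgb : ∀ k ≤ N, ‖iteratedFDeriv ℝ k g x‖ ≤ b)
    {k : ℕ} (hk : k ≤ N) :
    ‖iteratedFDeriv ℝ k (fun y => f y • g y) x‖ ≤ 2 ^ N * (a * b) := by
  have ha : 0 ≤ a := (norm_nonneg _).trans (hfa 0 N.zero_le)
  have hb : 0 ≤ b := (norm_nonneg _).trans (hgb 0 N.zero_le)
  calc ‖iteratedFDeriv ℝ k (fun y => f y • g y) x‖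
      ≤ ∑ i ∈ Finset.range (k + 1), (k.choose i : ℝ) * ‖iteratedFDeriv ℝ i f x‖ *
          ‖iteratedFDeriv ℝ (k - i) g x‖ :=
        norm_iteratedFDeriv_smul_le hf hg x (by exact_mod_cast hk)
    _ ≤ ∑ i ∈ Finset.range (k + 1), (k.choose i : ℝ) * a * b := by
        gcongr with i hi
        · exact hfa i ((Finset.mem_range_succ_iff.1 hi).trans hk)
        · exact hgb (k - i) ((k.sub_le i).trans hk)
    _ = 2 ^ k * (a * b) := by
        simp only [mul_assoc, ← Finset.sum_mul]
        rw [← Nat.cast_sum, Nat.sum_range_choose]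
        push_cast
        rfl
    _ ≤ 2 ^ N * (a * b) := by
        gcongr
        exact one_le_two

end DerivativeBounds

section FourierDecay

open scoped FourierTransform

variable {V : Type*} [NormedAddCommGroup V] [InnerProductSpace ℝ V] [FiniteDimensional ℝ V]
  [MeasurableSpace V] [BorelSpace V] {E : Type*} [NormedAddCommGroup E] [NormedSpace ℂ E]

theorem pow_mul_norm_fourier_le {f : V → E} {g : V → ℝ} {N : ℕ} (hf : ContDiff ℝ N f)
    (hg : Integrable g) (hfg : ∀ k ≤ N, ∀ w, ‖iteratedFDeriv ℝ k f w‖ ≤ g w)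
    {k : ℕ} (hk : k ≤ N) (ζ : V) :
    ‖ζ‖ ^ k * ‖𝓕 f ζ‖ ≤ 2 ^ k * (k + 1) * ∫ w, g w := by
  have hint : ∀ j ≤ N, Integrable fun w => ‖iteratedFDeriv ℝ j f w‖ := fun j hj =>
    (hg.mono' (hf.continuous_iteratedFDeriv (by exact_mod_cast hj)).aestronglyMeasurable
      (.of_forall (hfg j hj))).norm
  have hparts := Real.pow_mul_norm_iteratedFDeriv_fourier_le (K := 0) (N := N) (k := 0) (n := k)
    hf (fun i j hi hj => by
      have hi0 : i = 0 := by simpa using hi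
      simpa [hi0] using hint j (by exact_mod_cast hj)) le_rfl (by exact_mod_cast hk) ζ
  simp only [norm_iteratedFDeriv_zero, pow_zero, one_mul, Nat.cast_zero, mul_zero, zero_add,
    Finset.range_one, Finset.singleton_product, Finset.sum_map,
    Function.Embedding.coeFn_mk] at hparts
  calc ‖ζ‖ ^ k * ‖𝓕 f ζ‖
      ≤ 2 ^ k * ∑ j ∈ Finset.range (k + 1), ∫ w, ‖iteratedFDeriv ℝ j f w‖ := hparts
    _ ≤ 2 ^ k * ∑ _j ∈ Finset.range (k + 1), ∫ w, g w := by
        gcongr with j hj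
        · exact hint j ((Finset.mem_range_succ_iff.1 hj).trans hk)
        · exact hfg j ((Finset.mem_range_succ_iff.1 hj).trans hk)
    _ = 2 ^ k * (k + 1) * ∫ w, g w := by
        rw [Finset.sum_const, Finset.card_range, nsmul_eq_mul]
        push_cast
        ring

/-- The constant in the Fourier decay estimate `norm_fourier_le_one_add_norm_rpow`. -/
def fourierDecayConst (N : ℕ) : ℝ := 2 ^ N * (1 + 2 ^ N * (N + 1))

theorem norm_fourier_le_one_add_norm_rpow {f : V → E} {g : V → ℝ} {N : ℕ} (hf : ContDiff ℝ N f)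
    (hg : Integrable g) (hfg : ∀ k ≤ N, ∀ w, ‖iteratedFDeriv ℝ k f w‖ ≤ g w) (ζ : V) :
    ‖𝓕 f ζ‖ ≤ fourierDecayConst N * (∫ w, g w) * (1 + ‖ζ‖) ^ (-(N : ℝ)) := by
  have h0 := pow_mul_norm_fourier_le hf hg hfg N.zero_le ζ
  have hN := pow_mul_norm_fourier_le hf hg hfg le_rfl ζ
  have hdecay := pow_mul_le_of_le_of_pow_mul_le (k := 0) (l := N) (norm_nonneg ζ) (norm_nonneg _)
    (by simpa using h0) (by simpa using hN)
  rw [pow_zero, one_mul] at hdecay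
  refine hdecay.trans_eq ?_
  simp only [fourierDecayConst]
  ring

end FourierDecay

section Parseval

open scoped FourierTransform

variable {V : Type*} [NormedAddCommGroup V] [InnerProductSpace ℝ V] [FiniteDimensional ℝ V]
  [MeasurableSpace V] [BorelSpace V] {f g : V → ℂ}

theorem integral_fourier_mul_eq_integral_mul_fourier (hf : Integrable f) (hg : Integrable g) :
    ∫ ζ, 𝓕 f ζ * g ζ = ∫ z, f z * 𝓕 g z := by
  simpa using! VectorFourier.integral_fourierIntegral_smul_eq_flip (L := innerₗ V)
    Real.continuous_fourierChar continuous_inner hf hg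

theorem integral_mul_eq_integral_fourier_mul_fourier_neg (hfc : Continuous f)
    (hf : Integrable f) (hf' : Integrable (𝓕 f)) (hg : Integrable g) :
    ∫ z, f z * g z = ∫ ζ, 𝓕 f ζ * 𝓕 g (-ζ) := by
  have hinv : ∀ z, 𝓕 (𝓕 f) (-z) = f z := fun z => by
    rw [← Real.fourierInv_eq_fourier_neg, hfc.fourierInv_fourier_eq hf hf']
  calc ∫ z, f z * g z = ∫ z, 𝓕 (𝓕 f) z * g (-z) := by
        rw [← integral_neg_eq_self fun z => f z * g z]
        simp only [← hinv, neg_neg]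
    _ = ∫ ζ, 𝓕 f ζ * 𝓕 (fun z => g (-z)) ζ :=
        integral_fourier_mul_eq_integral_mul_fourier hf' hg.comp_neg
    _ = ∫ ζ, 𝓕 f ζ * 𝓕 g (-ζ) := by
        have hneg : ∀ ζ, 𝓕 (fun z => g (-z)) ζ = 𝓕 g (-ζ) := fun ζ => by
          rw [Real.fourier_eq, Real.fourier_eq, ← integral_neg_eq_self]
          simp only [inner_neg_left, inner_neg_right, neg_neg]
        simp only [hneg]

end Parseval

section ShortTimeFourier

open scoped FourierTransform

variable {V : Type*} [NormedAddCommGroup V] [InnerProductSpace ℝ V] [FiniteDimensional ℝ V]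
  [MeasurableSpace V] [BorelSpace V] {E : Type*} [NormedAddCommGroup E] [NormedSpace ℂ E]
  {g : V → ℝ} {F : V → E}

/-- The short-time Fourier transform of `F` with real window `g`: the Fourier transform, at
frequency `ζ`, of `F` localized around `x` by the translated window `g (· - x)`. -/
def shortTimeFourier (g : V → ℝ) (F : V → E) (x ζ : V) : E :=
  𝓕 (fun z => g (z - x) • F z) ζ

theorem norm_shortTimeFourier_le (g : V → ℝ) (F : V → E) (x ζ : V) :
    ‖shortTimeFourier g F x ζ‖ ≤ ∫ z, ‖g (z - x)‖ * ‖F z‖ := by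
  simpa only [shortTimeFourier, norm_smul] using!
    VectorFourier.norm_fourierIntegral_le_integral_norm Real.fourierChar volume (innerₗ V)
      (fun z => g (z - x) • F z) ζ

theorem continuous_shortTimeFourier {x : V} (h : Integrable fun z => g (z - x) • F z) :
    Continuous (shortTimeFourier g F x) :=
  VectorFourier.fourierIntegral_continuous (L := innerₗ V) Real.continuous_fourierChar
    continuous_inner h

theorem integrable_window_smul_of_norm_le {G : Type*} [NormedAddCommGroup G] [NormedSpace ℝ G]
    {f : V → G} {b : ℝ} (hg : Continuous g) (hgb : ∀ z, ‖g z‖ ≤ b) (hf : Integrable f) (x : V) :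
    Integrable fun z => g (z - x) • f z :=
  hf.bdd_smul b (hg.comp (by fun_prop)).aestronglyMeasurable (.of_forall fun _ => hgb _)

theorem aestronglyMeasurable_shortTimeFourier (hg : Continuous g)
    (hF : AEStronglyMeasurable F) :
    AEStronglyMeasurable (fun p : V × V => shortTimeFourier g F p.1 p.2)
      (volume.prod volume) := by
  have hphase : Continuous fun q : (V × V) × V => Real.fourierChar (-inner ℝ q.2 q.1.2) :=
    Real.continuous_fourierChar.comp (by fun_prop)
  have hwindow : Continuous fun q : (V × V) × V => g (q.2 - q.1.1) := by fun_prop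
  have hFsnd : AEStronglyMeasurable (fun q : (V × V) × V => F q.2)
      ((volume.prod volume).prod volume) := hF.comp_snd
  exact (hphase.aestronglyMeasurable.smul
    (hwindow.aestronglyMeasurable.smul hFsnd)).integral_prod_right'

theorem integrable_integral_window_mul {g f : V → ℝ} (hg : Integrable g) (hf : Integrable f) :
    Integrable fun x => ∫ z, g (z - x) * f z := by
  refine (hf.integrable_convolution (ContinuousLinearMap.mul ℝ ℝ) hg.comp_neg).congr
    (.of_forall fun x => ?_)
  simp only [convolution, ContinuousLinearMap.mul_apply', neg_sub, mul_comm]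

theorem integral_integral_window_mul {𝕜 : Type*} [RCLike 𝕜] {k f : V → 𝕜} (hk : Integrable k)
    (hf : Integrable f) :
    ∫ x, ∫ z, k (z - x) * f z = (∫ z, k z) * ∫ z, f z := by
  have hconv := integral_convolution (ContinuousLinearMap.mul ℝ 𝕜) hf hk.comp_neg
  simp only [convolution, ContinuousLinearMap.mul_apply', neg_sub, integral_neg_eq_self k] at hconv
  rw [mul_comm, ← hconv]
  simp only [mul_comm]

end ShortTimeFourier

section Duality

open Module

variable {V : Type*} [NormedAddCommGroup V] [InnerProductSpace ℝ V] [FiniteDimensional ℝ V]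
  [MeasurableSpace V] [BorelSpace V]

theorem exists_norm_shortTimeFourier_le_one_add_norm_rpow {E : Type*} [NormedAddCommGroup E]
    [NormedSpace ℂ E] {N : ℕ} {a : V → E} (ha : ContDiff ℝ N a)
    (hbd : ∀ k ≤ N, ∃ M : ℝ, ∀ z, ‖iteratedFDeriv ℝ k a z‖ ≤ M)
    {χ : V → ℝ} (hχ : ContDiff ℝ N χ) (hχc : HasCompactSupport χ) :
    ∃ C : ℝ, ∀ x ζ, ‖shortTimeFourier χ a x ζ‖ ≤ C * (1 + ‖ζ‖) ^ (-(N : ℝ)) := by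
  choose! M hM using hbd
  let A : ℝ := ∑ k ∈ Finset.range (N + 1), |M k|
  let h : V → ℝ := fun w => ∑ k ∈ Finset.range (N + 1), ‖iteratedFDeriv ℝ k χ w‖
  have ha' : ∀ k ≤ N, ∀ z, ‖iteratedFDeriv ℝ k a z‖ ≤ A := fun k hk z =>
    ((hM k hk z).trans (le_abs_self _)).trans (Finset.single_le_sum (f := fun k => |M k|)
      (fun _ _ => abs_nonneg _) (Finset.mem_range_succ_iff.2 hk))
  have hχ' : ∀ k ≤ N, ∀ w, ‖iteratedFDeriv ℝ k χ w‖ ≤ h w := fun k hk w =>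
    Finset.single_le_sum (f := fun k => ‖iteratedFDeriv ℝ k χ w‖)
      (fun _ _ => norm_nonneg _) (Finset.mem_range_succ_iff.2 hk)
  have hint : Integrable h := integrable_finsetSum _ fun k hk =>
    ((hχ.continuous_iteratedFDeriv (by
      exact_mod_cast Finset.mem_range_succ_iff.1 hk)).integrable_of_hasCompactSupport
      (hχc.iteratedFDeriv k)).norm
  refine ⟨fourierDecayConst N * ∫ w, 2 ^ N * (h w * A), fun x ζ => ?_⟩
  have hχx : ContDiff ℝ N fun z => χ (z - x) := hχ.comp (contDiff_id.sub contDiff_const)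
  have hdom : ∀ k ≤ N, ∀ z,
      ‖iteratedFDeriv ℝ k (fun z => χ (z - x) • a z) z‖ ≤ 2 ^ N * (h (z - x) * A) := fun k hk z =>
    norm_iteratedFDeriv_smul_le_of_le hχx ha
      (fun j hj => by rw [iteratedFDeriv_comp_sub]; exact hχ' j hj _) (fun j hj => ha' j hj z) hk
  refine (norm_fourier_le_one_add_norm_rpow (hχx.smul ha)
    (((hint.comp_sub_right x).mul_const A).const_mul _) hdom ζ).trans_eq ?_
  rw [integral_sub_right_eq_self (fun w => 2 ^ N * (h w * A)) x]

theorem integrable_window_smul {E : Type*} [NormedAddCommGroup E] [NormedSpace ℂ E] {a : V → E}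
    (ha : Continuous a) {χ : V → ℝ} (hχ : Continuous χ) (hχc : HasCompactSupport χ) (x : V) :
    Integrable fun z => χ (z - x) • a z :=
  Continuous.integrable_of_hasCompactSupport (by fun_prop)
    (hχc.comp_homeomorph (Homeomorph.subRight x)).smul_right

theorem integral_window_mul_eq_integral_shortTimeFourier_mul {a F : V → ℂ} (ha : Continuous a)
    {χ : V → ℝ} (hχ : Continuous χ) (hχc : HasCompactSupport χ) {g : V → ℝ} {x : V}
    (hgF : Integrable fun z => g (z - x) • F z)
    (hint : Integrable fun ζ => shortTimeFourier χ a x ζ) :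
    ∫ z, (χ (z - x) • a z) * (g (z - x) • F z) =
      ∫ ζ, shortTimeFourier χ a x ζ * shortTimeFourier g F x (-ζ) :=
  integral_mul_eq_integral_fourier_mul_fourier_neg (by fun_prop)
    (integrable_window_smul ha hχ hχc x) hint hgF

theorem integrable_mul_norm_shortTimeFourier {F : V → ℂ} (hF : Integrable F) {g : V → ℝ}
    (hg : Continuous g) (hgi : Integrable g) {B : V → ℝ} (hB : Integrable B) :
    Integrable (fun p : V × V => B p.2 * ‖shortTimeFourier g F p.1 (-p.2)‖)
      (volume.prod volume) := by
  have hdom := (integrable_integral_window_mul hgi.norm hF.norm).mul_prod hB.norm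
  have hreflect : MeasurePreserving (fun p : V × V => (p.1, -p.2)) (volume.prod volume)
      (volume.prod volume) :=
    (MeasurePreserving.id volume).prod (Measure.measurePreserving_neg volume)
  have hmeas :=
    (aestronglyMeasurable_shortTimeFourier hg hF.aestronglyMeasurable).comp_measurePreserving
      hreflect
  refine hdom.mono' (hB.aestronglyMeasurable.comp_snd.mul hmeas.norm) (.of_forall fun p => ?_)
  rw [norm_mul, norm_norm, mul_comm]
  gcongr
  exact norm_shortTimeFourier_le g F p.1 (-p.2)

theorem norm_integral_integral_mul_shortTimeFourier_le {F : V → ℂ} (hF : Integrable F)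
    {g : V → ℝ} (hg : Continuous g) (hgi : Integrable g) {c : V → V → ℂ} {B : V → ℝ}
    (hB : Integrable B) (hcB : ∀ x ζ, ‖c x ζ‖ ≤ B ζ) {Q : ℝ}
    (hQ : ∀ ζ, ∫ x, ‖shortTimeFourier g F x ζ‖ ≤ Q) :
    ‖∫ x, ∫ ζ, c x ζ * shortTimeFourier g F x (-ζ)‖ ≤ (∫ ζ, B ζ) * Q := by
  have hB₀ : ∀ ζ, 0 ≤ B ζ := fun ζ => (norm_nonneg _).trans (hcB 0 ζ)
  have hint := integrable_mul_norm_shortTimeFourier hF hg hgi hB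
  have hslice : ∀ᵐ x, ‖∫ ζ, c x ζ * shortTimeFourier g F x (-ζ)‖ ≤
      ∫ ζ, B ζ * ‖shortTimeFourier g F x (-ζ)‖ := by
    filter_upwards [hint.prod_right_ae] with x hx
    refine norm_integral_le_of_norm_le hx (.of_forall fun ζ => ?_)
    rw [norm_mul]
    gcongr
    exact hcB x ζ
  calc ‖∫ x, ∫ ζ, c x ζ * shortTimeFourier g F x (-ζ)‖
      ≤ ∫ x, ∫ ζ, B ζ * ‖shortTimeFourier g F x (-ζ)‖ :=
        norm_integral_le_of_norm_le hint.integral_prod_left hslice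
    _ = ∫ ζ, B ζ * ∫ x, ‖shortTimeFourier g F x (-ζ)‖ := by
        rw [integral_integral_swap hint]
        simp only [integral_const_mul]
    _ ≤ ∫ ζ, B ζ * Q := by
        refine integral_mono_of_nonneg (.of_forall fun ζ => ?_) (hB.mul_const Q)
          (.of_forall fun ζ => mul_le_mul_of_nonneg_left (hQ (-ζ)) (hB₀ ζ))
        exact mul_nonneg (hB₀ ζ) (integral_nonneg fun _ => norm_nonneg _)
    _ = (∫ ζ, B ζ) * Q := integral_mul_const Q B

theorem exists_contDiff_window_integral_mul_pos {g : V → ℝ} (hg : Continuous g)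
    (hg₀ : ∀ z, 0 < g z) (N : ℕ) :
    ∃ χ : V → ℝ, ContDiff ℝ N χ ∧ HasCompactSupport χ ∧ 0 < ∫ z, χ z * g z := by
  let ρ : ContDiffBump (0 : V) := ⟨1, 2, one_pos, one_lt_two⟩
  refine ⟨ρ, ρ.contDiff, ρ.hasCompactSupport, ?_⟩
  refine (ρ.continuous.mul hg).integral_pos_of_hasCompactSupport_nonneg_nonzero (x := 0)
    ρ.hasCompactSupport.mul_right (fun z => mul_nonneg ρ.nonneg (hg₀ z).le) ?_
  rw [ρ.one_of_mem_closedBall (Metric.mem_closedBall_self ρ.rIn_pos.le), one_mul]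
  exact (hg₀ 0).ne'

theorem exists_norm_integral_mul_le_of_shortTimeFourier {N : ℕ} (hN : finrank ℝ V < N)
    {a : V → ℂ} (ha : ContDiff ℝ N a)
    (hbd : ∀ k ≤ N, ∃ M : ℝ, ∀ z, ‖iteratedFDeriv ℝ k a z‖ ≤ M)
    {g : V → ℝ} (hg : Continuous g) (hgi : Integrable g) (hg₀ : ∀ z, 0 < g z)
    (hgb : ∃ b, ∀ z, ‖g z‖ ≤ b) :
    ∃ C : ℝ, ∀ F : V → ℂ, Integrable F → ∀ Q : ℝ, (∀ ζ, ∫ x, ‖shortTimeFourier g F x ζ‖ ≤ Q) →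
      ‖∫ z, a z * F z‖ ≤ C * Q := by
  obtain ⟨χ, hχ, hχc, hκ⟩ := exists_contDiff_window_integral_mul_pos hg hg₀ N
  obtain ⟨C, hC⟩ := exists_norm_shortTimeFourier_le_one_add_norm_rpow ha hbd hχ hχc
  obtain ⟨M, hM⟩ := hbd 0 N.zero_le
  obtain ⟨b, hb⟩ := hgb
  let B : V → ℝ := fun ζ => C * (1 + ‖ζ‖) ^ (-(N : ℝ))
  have hB : Integrable B := (integrable_one_add_norm (by exact_mod_cast hN)).const_mul C
  set κ : ℝ := ∫ z, χ z * g z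
  refine ⟨(∫ ζ, B ζ) / κ, fun F hF Q hQ => ?_⟩
  have haF : Integrable fun z => a z * F z :=
    hF.bdd_mul ha.continuous.aestronglyMeasurable
      (.of_forall fun z => by simpa only [norm_iteratedFDeriv_zero] using hM z)
  have hχg : Integrable fun z => χ z * g z :=
    (hχ.continuous.mul hg).integrable_of_hasCompactSupport hχc.mul_right
  have hgF : ∀ x, Integrable fun z => g (z - x) • F z :=
    integrable_window_smul_of_norm_le hg hb hF
  have hVa : ∀ x, Integrable fun ζ => shortTimeFourier χ a x ζ := fun x =>
    hB.mono' (continuous_shortTimeFourier (integrable_window_smul ha.continuous hχ.continuous hχc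
      x)).aestronglyMeasurable (.of_forall fun ζ => hC x ζ)
  have hdecomp : (κ : ℂ) * ∫ z, a z * F z =
      ∫ x, ∫ ζ, shortTimeFourier χ a x ζ * shortTimeFourier g F x (-ζ) := by
    simp only [← integral_window_mul_eq_integral_shortTimeFourier_mul ha.continuous
      hχ.continuous hχc (hgF _) (hVa _)]
    rw [← integral_complex_ofReal, ← integral_integral_window_mul
      (k := fun z => ((χ z * g z : ℝ) : ℂ)) hχg.ofReal haF]
    simp only [Complex.real_smul, Complex.ofReal_mul, mul_mul_mul_comm]
  have hbound := norm_integral_integral_mul_shortTimeFourier_le hF hg hgi hB hC hQ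
  rw [← hdecomp, norm_mul, Complex.norm_real, Real.norm_of_nonneg hκ.le,
    ← le_div_iff₀' hκ] at hbound
  exact hbound.trans_eq (mul_div_right_comm _ _ _)

end Duality

section GaussianWindow

variable {V : Type*} [NormedAddCommGroup V]

/-- The centred Gaussian `x ↦ exp (-b ‖x‖²)`, used as a window for short-time Fourier transforms. -/
def gaussianWindow (b : ℝ) (x : V) : ℝ := Real.exp (-b * ‖x‖ ^ 2)

theorem gaussianWindow_pos (b : ℝ) (x : V) : 0 < gaussianWindow b x := Real.exp_pos _

theorem norm_gaussianWindow_le_one {b : ℝ} (hb : 0 ≤ b) (x : V) : ‖gaussianWindow b x‖ ≤ 1 := by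
  rw [Real.norm_of_nonneg (gaussianWindow_pos b x).le]
  exact Real.exp_le_one_iff.2 (mul_nonpos_of_nonpos_of_nonneg (neg_nonpos.2 hb) (sq_nonneg _))

theorem continuous_gaussianWindow (b : ℝ) : Continuous (gaussianWindow b : V → ℝ) := by
  unfold gaussianWindow
  fun_prop

theorem gaussianWindow_sq (b : ℝ) (x : V) : gaussianWindow b x ^ 2 = gaussianWindow (2 * b) x := by
  rw [gaussianWindow, gaussianWindow, ← Real.exp_nat_mul]
  congr 1
  push_cast
  ring

variable [InnerProductSpace ℝ V]

theorem gaussianWindow_two_mul_mul_gaussianWindow_half (b : ℝ) (x y : V) :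
    gaussianWindow (2 * b) x * gaussianWindow (b / 2) y =
      gaussianWindow b (x + (2⁻¹ : ℝ) • y) * gaussianWindow b (x + (-2⁻¹ : ℝ) • y) := by
  have hpar := parallelogram_law_with_norm ℝ x ((2⁻¹ : ℝ) • y)
  rw [norm_smul, Real.norm_of_nonneg (by norm_num)] at hpar
  simp only [gaussianWindow, ← Real.exp_add, neg_smul, ← sub_eq_add_neg]
  congr 1
  linear_combination b * hpar

theorem hasTemperateGrowth_gaussianWindow {b : ℝ} (hb : 0 ≤ b) :
    (gaussianWindow b : V → ℝ).HasTemperateGrowth := by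
  have hunique : UniqueDiffOn ℝ (Set.Ioi (-1 : ℝ)) := isOpen_Ioi.uniqueDiffOn
  have hexp : ContDiff ℝ (⊤ : ℕ∞) fun r : ℝ => Real.exp (-b * r) := by fun_prop
  refine Function.HasTemperateGrowth.comp' (g := fun r : ℝ => Real.exp (-b * r))
    (f := fun x : V => ‖x‖ ^ 2) (t := Set.Ioi (-1)) ?_ hunique hexp.contDiffOn
    (fun N => ⟨0, (1 + b) ^ N * Real.exp b, by positivity, fun k hk r hr => ?_⟩) (by fun_prop)
  · rintro - ⟨x, rfl⟩
    exact (neg_one_lt_zero (R := ℝ)).trans_le (sq_nonneg ‖x‖)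
  · rw [norm_iteratedFDerivWithin_eq_norm_iteratedDerivWithin,
      iteratedDerivWithin_eq_iteratedDeriv hunique
        (hexp.of_le (by exact_mod_cast le_top)).contDiffAt hr, iteratedDeriv_exp_const_mul]
    rw [norm_mul, norm_pow, norm_neg, Real.norm_of_nonneg hb,
      Real.norm_of_nonneg (Real.exp_nonneg _), pow_zero, mul_one]
    gcongr
    · exact (pow_le_pow_left₀ hb (by linarith) k).trans (pow_le_pow_right₀ (by linarith) hk)
    · nlinarith [Set.mem_Ioi.1 hr]

variable [FiniteDimensional ℝ V] [MeasurableSpace V] [BorelSpace V]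

theorem integrable_gaussianWindow {b : ℝ} (hb : 0 < b) :
    Integrable (gaussianWindow b : V → ℝ) :=
  (GaussianFourier.integrable_cexp_neg_mul_sq_norm_add (V := V) (b := b) (by simpa) 0 0).norm.congr
    (.of_forall fun x => by
      simp [gaussianWindow, Complex.norm_exp, ← Complex.ofReal_pow])

end GaussianWindow

section GaborPlancherel

open scoped FourierTransform

variable {V : Type*} [NormedAddCommGroup V] [InnerProductSpace ℝ V] {E : Type*}
  [NormedAddCommGroup E] [InnerProductSpace ℂ E] {g : V → ℝ}

theorem exists_schwartzMap_eq_window_smul (hg : g.HasTemperateGrowth) (u : SchwartzMap V E)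
    (x : V) : ∃ f : SchwartzMap V E, ⇑f = fun z => g (z - x) • u z :=
  ⟨SchwartzMap.smulLeftCLM E (fun z => g (z - x)) u,
    funext (SchwartzMap.smulLeftCLM_apply_apply (hg.comp (by fun_prop)) u)⟩

variable [FiniteDimensional ℝ V] [MeasurableSpace V] [BorelSpace V]

theorem integrable_norm_sq (u : SchwartzMap V E) : Integrable fun z => ‖u z‖ ^ 2 :=
  (u.memLp 2).integrable_norm_pow two_ne_zero

theorem integrable_norm_shortTimeFourier_sq_slice (hg : g.HasTemperateGrowth)
    (u : SchwartzMap V E) (x : V) : Integrable fun ζ => ‖shortTimeFourier g u x ζ‖ ^ 2 := by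
  obtain ⟨f, hf⟩ := exists_schwartzMap_eq_window_smul hg u x
  simpa only [shortTimeFourier, ← hf, ← SchwartzMap.fourier_coe] using integrable_norm_sq (𝓕 f)

variable [CompleteSpace E]

theorem integral_norm_shortTimeFourier_sq_slice (hg : g.HasTemperateGrowth)
    (u : SchwartzMap V E) (x : V) :
    ∫ ζ, ‖shortTimeFourier g u x ζ‖ ^ 2 = ∫ z, g (z - x) ^ 2 * ‖u z‖ ^ 2 := by
  obtain ⟨f, hf⟩ := exists_schwartzMap_eq_window_smul hg u x
  simp only [shortTimeFourier, ← hf, ← SchwartzMap.fourier_coe]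
  rw [SchwartzMap.integral_norm_sq_fourier]
  simp only [hf, norm_smul, mul_pow, Real.norm_eq_abs, sq_abs]

theorem integrable_norm_shortTimeFourier_sq (hg : g.HasTemperateGrowth)
    (hg₂ : Integrable fun z => g z ^ 2) (u : SchwartzMap V E) :
    Integrable (fun p : V × V => ‖shortTimeFourier g u p.1 p.2‖ ^ 2) (volume.prod volume) := by
  refine (integrable_prod_iff ((aestronglyMeasurable_shortTimeFourier hg.1.continuous
    u.continuous.aestronglyMeasurable).norm.pow 2)).2
    ⟨.of_forall (integrable_norm_shortTimeFourier_sq_slice hg u), ?_⟩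
  simpa only [Pi.pow_apply, norm_pow, norm_norm, integral_norm_shortTimeFourier_sq_slice hg u] using
    integrable_integral_window_mul hg₂ (integrable_norm_sq u)

theorem integral_norm_shortTimeFourier_sq (hg : g.HasTemperateGrowth)
    (hg₂ : Integrable fun z => g z ^ 2) (u : SchwartzMap V E) :
    ∫ p : V × V, ‖shortTimeFourier g u p.1 p.2‖ ^ 2 ∂(volume.prod volume) =
      (∫ z, g z ^ 2) * ∫ z, ‖u z‖ ^ 2 := by
  rw [integral_prod _ (integrable_norm_shortTimeFourier_sq hg hg₂ u)]
  simp only [integral_norm_shortTimeFourier_sq_slice hg u]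
  exact integral_integral_window_mul hg₂ (integrable_norm_sq u)

theorem memLp_shortTimeFourier_withLp (hg : g.HasTemperateGrowth)
    (hg₂ : Integrable fun z => g z ^ 2) (u : SchwartzMap V E) :
    MemLp (fun z : WithLp 2 (V × V) => shortTimeFourier g u z.fst z.snd) 2 := by
  have hmp := WithLp.volume_preserving_ofLp V V
  have hmeas := (aestronglyMeasurable_shortTimeFourier hg.1.continuous
    u.continuous.aestronglyMeasurable).comp_measurePreserving hmp
  exact (memLp_two_iff_integrable_sq_norm hmeas).2
    (hmp.integrable_comp_of_integrable (integrable_norm_shortTimeFourier_sq hg hg₂ u))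

theorem integral_norm_shortTimeFourier_sq_withLp (hg : g.HasTemperateGrowth)
    (hg₂ : Integrable fun z => g z ^ 2) (u : SchwartzMap V E) :
    ∫ z : WithLp 2 (V × V), ‖shortTimeFourier g u z.fst z.snd‖ ^ 2 =
      (∫ z, g z ^ 2) * ∫ z, ‖u z‖ ^ 2 := by
  rw [← integral_norm_shortTimeFourier_sq hg hg₂ u]
  exact (WithLp.volume_preserving_ofLp V V).integral_comp
    (MeasurableEquiv.toLp 2 (V × V)).symm.measurableEmbedding
    (fun p : V × V => ‖shortTimeFourier g u p.1 p.2‖ ^ 2)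

end GaborPlancherel

section WignerTransform

open Module
open scoped FourierTransform ComplexConjugate

variable {V : Type*} [NormedAddCommGroup V] [NormedSpace ℝ V]

theorem exists_norm_iteratedFDeriv_le_one_add_norm_rpow {E : Type*}
    [NormedAddCommGroup E] [NormedSpace ℝ E] (u : SchwartzMap V E) (N M : ℕ) :
    ∃ C : ℝ, ∀ k ≤ N, ∀ x, ‖iteratedFDeriv ℝ k u x‖ ≤ C * (1 + ‖x‖) ^ (-(M : ℝ)) := by
  refine ⟨2 ^ M * ((Finset.Iic (M, N)).sup fun m => SchwartzMap.seminorm ℝ m.1 m.2) u,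
    fun k hk x => ?_⟩
  rw [Real.rpow_neg (by positivity), Real.rpow_natCast, ← div_eq_mul_inv,
    le_div_iff₀' (by positivity)]
  exact SchwartzMap.one_add_le_sup_seminorm_apply (𝕜 := ℝ) (m := (M, N)) le_rfl hk u x

theorem one_add_norm_mul_one_add_norm_le (x y : V) :
    (1 + ‖x‖) * (1 + ‖y‖) ≤
      ((1 + ‖x + (2⁻¹ : ℝ) • y‖) * (1 + ‖x + (-2⁻¹ : ℝ) • y‖)) ^ 2 := by
  set s := x + (2⁻¹ : ℝ) • y with hs
  set t := x + (-2⁻¹ : ℝ) • y with ht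
  have hx : ‖x‖ ≤ ‖s‖ + ‖t‖ := by
    have hmid : x = (2⁻¹ : ℝ) • (s + t) := by rw [hs, ht]; module
    calc ‖x‖ = 2⁻¹ * ‖s + t‖ := by rw [hmid, norm_smul]; norm_num
      _ ≤ ‖s + t‖ := by linarith [norm_nonneg (s + t)]
      _ ≤ ‖s‖ + ‖t‖ := norm_add_le s t
  have hy : ‖y‖ ≤ ‖s‖ + ‖t‖ := by
    have hdiff : y = s - t := by rw [hs, ht]; module
    exact hdiff ▸ norm_sub_le s t
  have hst : 1 + (‖s‖ + ‖t‖) ≤ (1 + ‖s‖) * (1 + ‖t‖) := by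
    nlinarith [mul_nonneg (norm_nonneg s) (norm_nonneg t)]
  rw [sq]
  gcongr <;> linarith

theorem one_add_norm_rpow_mul_one_add_norm_rpow_le (M : ℕ) (x y : V) :
    (1 + ‖x + (2⁻¹ : ℝ) • y‖) ^ (-((2 * M : ℕ) : ℝ)) *
        (1 + ‖x + (-2⁻¹ : ℝ) • y‖) ^ (-((2 * M : ℕ) : ℝ)) ≤
      (1 + ‖x‖) ^ (-(M : ℝ)) * (1 + ‖y‖) ^ (-(M : ℝ)) := by
  rw [← Real.mul_rpow (by positivity) (by positivity), ← Real.mul_rpow (by positivity)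
    (by positivity), Real.rpow_neg (by positivity), Real.rpow_neg (by positivity),
    Real.rpow_natCast, Real.rpow_natCast, pow_mul]
  gcongr
  exact one_add_norm_mul_one_add_norm_le x y

/-- The product of the values of `u` and `conj v` at the ends `x ± y / 2` of the segment with
midpoint `x` and direction `y`; the Wigner transform is its Fourier transform in `y`. -/
def midpointProduct (u v : V → ℂ) (x y : V) : ℂ :=
  u (x + (2⁻¹ : ℝ) • y) * conj (v (x + (-2⁻¹ : ℝ) • y))

theorem contDiff_midpointProduct (u v : SchwartzMap V ℂ) (N : ℕ) (x : V) :
    ContDiff ℝ N (midpointProduct u v x) :=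
  ((u.smooth N).comp (by fun_prop)).mul
    (Complex.conjCLE.contDiff.comp ((v.smooth N).comp (by fun_prop)))

theorem exists_norm_iteratedFDeriv_midpointProduct_le (u v : SchwartzMap V ℂ) (N M : ℕ) :
    ∃ C : ℝ, ∀ x, ∀ k ≤ N, ∀ y, ‖iteratedFDeriv ℝ k (midpointProduct u v x) y‖ ≤
      C * (1 + ‖x‖) ^ (-(M : ℝ)) * (1 + ‖y‖) ^ (-(M : ℝ)) := by
  obtain ⟨A, hA⟩ := exists_norm_iteratedFDeriv_le_one_add_norm_rpow u N (2 * M)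
  obtain ⟨B, hB⟩ := exists_norm_iteratedFDeriv_le_one_add_norm_rpow v N (2 * M)
  have hA₀ : 0 ≤ A := by simpa using (norm_nonneg _).trans (hA 0 N.zero_le 0)
  have hB₀ : 0 ≤ B := by simpa using (norm_nonneg _).trans (hB 0 N.zero_le 0)
  have hu : ∀ x, ContDiff ℝ N fun y => u (x + (2⁻¹ : ℝ) • y) := fun x =>
    (u.smooth N).comp (by fun_prop)
  have hv : ∀ x, ContDiff ℝ N fun y => v (x + (-2⁻¹ : ℝ) • y) := fun x =>
    (v.smooth N).comp (by fun_prop)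
  refine ⟨2 ^ N * (A * B), fun x k hk y => ?_⟩
  calc _ ≤ 2 ^ N * (A * (1 + ‖x + (2⁻¹ : ℝ) • y‖) ^ (-((2 * M : ℕ) : ℝ)) *
          (B * (1 + ‖x + (-2⁻¹ : ℝ) • y‖) ^ (-((2 * M : ℕ) : ℝ)))) := by
        refine norm_iteratedFDeriv_smul_le_of_le (hu x) (Complex.conjCLE.contDiff.comp (hv x))
          (fun j hj => ?_) (fun j hj => ?_) hk
        · exact (norm_iteratedFDeriv_comp_const_add_smul_le (u.smooth j) (by norm_num) x y).trans
            (hA j hj _)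
        · refine (Complex.conjLIE.norm_iteratedFDeriv_comp_left _ y j).trans_le ?_
          exact (norm_iteratedFDeriv_comp_const_add_smul_le (v.smooth j) (by norm_num) x y).trans
            (hB j hj _)
    _ ≤ 2 ^ N * (A * B) * ((1 + ‖x‖) ^ (-(M : ℝ)) * (1 + ‖y‖) ^ (-(M : ℝ))) := by
        rw [mul_mul_mul_comm A, ← mul_assoc]
        exact mul_le_mul_of_nonneg_left (one_add_norm_rpow_mul_one_add_norm_rpow_le M x y)
          (by positivity)
    _ = _ := (mul_assoc _ _ _).symm

variable {H : Type*} [NormedAddCommGroup H] [InnerProductSpace ℝ H] [FiniteDimensional ℝ H]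
  [MeasurableSpace H] [BorelSpace H]

/-- The Wigner transform of `u` and `v` at position `x` and frequency `ξ`, in the normalization
of `𝓕`; the classical one is obtained by rescaling `ξ` by `2π`. -/
def wignerTransform (u v : H → ℂ) (x ξ : H) : ℂ :=
  𝓕 (midpointProduct u v x) ξ

theorem integrable_midpointProduct (u v : SchwartzMap H ℂ) (x : H) :
    Integrable (midpointProduct u v x) := by
  obtain ⟨C, hC⟩ := exists_norm_iteratedFDeriv_midpointProduct_le u v 0 (finrank ℝ H + 1)
  have hdecay : Integrable fun y : H => (1 + ‖y‖) ^ (-((finrank ℝ H + 1 : ℕ) : ℝ)) :=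
    integrable_one_add_norm (by simp)
  refine (hdecay.const_mul (C * (1 + ‖x‖) ^ (-((finrank ℝ H + 1 : ℕ) : ℝ)))).mono'
    (contDiff_midpointProduct u v 0 x).continuous.aestronglyMeasurable (.of_forall fun y => ?_)
  simpa only [norm_iteratedFDeriv_zero] using hC x 0 le_rfl y

theorem exists_norm_wignerTransform_le (u v : SchwartzMap H ℂ) (N : ℕ) (hN : finrank ℝ H < N) :
    ∃ C : ℝ, ∀ x ξ, ‖wignerTransform u v x ξ‖ ≤
      C * ((1 + ‖x‖) ^ (-(N : ℝ)) * (1 + ‖ξ‖) ^ (-(N : ℝ))) := by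
  obtain ⟨C, hC⟩ := exists_norm_iteratedFDeriv_midpointProduct_le u v N N
  refine ⟨fourierDecayConst N * C * ∫ y : H, (1 + ‖y‖) ^ (-(N : ℝ)), fun x ξ => ?_⟩
  refine (norm_fourier_le_one_add_norm_rpow (contDiff_midpointProduct u v N x)
    ((integrable_one_add_norm (by exact_mod_cast hN)).const_mul _) (hC x) ξ).trans_eq ?_
  rw [integral_const_mul]
  ring

theorem aestronglyMeasurable_wignerTransform (u v : SchwartzMap H ℂ) :
    AEStronglyMeasurable (fun p : H × H => wignerTransform u v p.1 p.2) (volume.prod volume) := by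
  have hphase : Continuous fun q : (H × H) × H => Real.fourierChar (-inner ℝ q.2 q.1.2) :=
    Real.continuous_fourierChar.comp (by fun_prop)
  have hu := u.continuous
  have hv := v.continuous
  have hprod : Continuous fun q : (H × H) × H => midpointProduct u v q.1.1 q.2 := by
    unfold midpointProduct
    fun_prop
  exact ((hphase.smul hprod).stronglyMeasurable.integral_prod_right'
    (ν := (volume : Measure H))).aestronglyMeasurable

theorem integrable_wignerTransform (u v : SchwartzMap H ℂ) :
    Integrable (fun p : H × H => wignerTransform u v p.1 p.2) (volume.prod volume) := by
  obtain ⟨C, hC⟩ := exists_norm_wignerTransform_le u v (finrank ℝ H + 1) (Nat.lt_succ_self _)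
  have hdecay : Integrable fun x : H => (1 + ‖x‖) ^ (-((finrank ℝ H + 1 : ℕ) : ℝ)) :=
    integrable_one_add_norm (by simp)
  exact ((hdecay.mul_prod hdecay).const_mul C).mono' (aestronglyMeasurable_wignerTransform u v)
    (.of_forall fun p => hC p.1 p.2)

theorem integrable_wignerTransform_withLp (u v : SchwartzMap H ℂ) :
    Integrable fun z : WithLp 2 (H × H) => wignerTransform u v z.fst z.snd :=
  (WithLp.volume_preserving_ofLp H H).integrable_comp_of_integrable
    (integrable_wignerTransform u v)

end WignerTransform

section ProductFormula

open Module
open scoped FourierTransform ComplexConjugate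

variable {H : Type*} [NormedAddCommGroup H] [InnerProductSpace ℝ H]

/-- The integrand of the short-time Fourier transform of `u` at position `p` and frequency `q`,
with window `gaussianWindow π`. -/
def gaborIntegrand (u : H → ℂ) (p q z : H) : ℂ :=
  Real.fourierChar (-inner ℝ z q) • gaussianWindow Real.pi (z - p) • u z

theorem gaussianWindow_mul_midpointProduct_eq (u v : H → ℂ) (x y c κ α β : H) :
    Real.fourierChar (-inner ℝ x α) • (gaussianWindow (2 * Real.pi) (x - c) : ℂ) *
        (midpointProduct u v x y * Real.fourierChar (-inner ℝ κ (y + β)) •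
          (gaussianWindow (Real.pi / 2) (y + β) : ℂ)) =
      Real.fourierChar (-inner ℝ κ β) • midpointProduct
        (gaborIntegrand u (c - (2⁻¹ : ℝ) • β) (κ + (2⁻¹ : ℝ) • α))
        (gaborIntegrand v (c + (2⁻¹ : ℝ) • β) (κ - (2⁻¹ : ℝ) • α)) x y := by
  have hphase : (Real.fourierChar (-inner ℝ x α) * Real.fourierChar (-inner ℝ κ (y + β)) : ℂ) =
      Real.fourierChar (-inner ℝ κ β) *
        (Real.fourierChar (-inner ℝ (x + (2⁻¹ : ℝ) • y) (κ + (2⁻¹ : ℝ) • α)) *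
          Real.fourierChar (inner ℝ (x + (-2⁻¹ : ℝ) • y) (κ - (2⁻¹ : ℝ) • α))) := by
    simp only [← Circle.coe_mul, ← AddChar.map_add_eq_mul]
    congr 2
    simp only [inner_add_left, inner_add_right, inner_sub_right, real_inner_smul_left,
      real_inner_smul_right, real_inner_comm κ]
    ring
  have hwindow := gaussianWindow_two_mul_mul_gaussianWindow_half Real.pi (x - c) (y + β)
  rw [show x - c + (2⁻¹ : ℝ) • (y + β) = x + (2⁻¹ : ℝ) • y - (c - (2⁻¹ : ℝ) • β) by module,
    show x - c + (-2⁻¹ : ℝ) • (y + β) = x + (-2⁻¹ : ℝ) • y - (c + (2⁻¹ : ℝ) • β) by module]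
    at hwindow
  replace hwindow := congrArg (fun r : ℝ => (r : ℂ)) hwindow
  push_cast at hwindow
  simp only [midpointProduct, gaborIntegrand, Circle.smul_def, smul_eq_mul, Complex.real_smul,
    map_mul, Complex.conj_ofReal, Circle.starRingEnd_addChar, neg_neg]
  linear_combination (gaussianWindow (2 * Real.pi) (x - c) *
    gaussianWindow (Real.pi / 2) (y + β) * u (x + (2⁻¹ : ℝ) • y) *
      conj (v (x + (-2⁻¹ : ℝ) • y))) * hphase +
    Real.fourierChar (-inner ℝ κ β) *
      Real.fourierChar (-inner ℝ (x + (2⁻¹ : ℝ) • y) (κ + (2⁻¹ : ℝ) • α)) *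
      Real.fourierChar (inner ℝ (x + (-2⁻¹ : ℝ) • y) (κ - (2⁻¹ : ℝ) • α)) *
      u (x + (2⁻¹ : ℝ) • y) * conj (v (x + (-2⁻¹ : ℝ) • y)) * hwindow

variable [FiniteDimensional ℝ H] [MeasurableSpace H] [BorelSpace H]

theorem integral_integral_midpointProduct {f g : H → ℂ} (hf : Integrable f) (hg : Integrable g) :
    ∫ x, ∫ y, midpointProduct f g x y = (∫ z, f z) * conj (∫ z, g z) := by
  have hslice : ∀ x, ∫ y, midpointProduct f g x y =
      |(2 : ℝ) ^ finrank ℝ H| • ∫ s, conj (g (-(s - (2 : ℝ) • x))) * f s := fun x => by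
    rw [← integral_add_left_eq_self (fun s => conj (g (-(s - (2 : ℝ) • x))) * f s) x,
      ← inv_inv ((2 : ℝ) ^ finrank ℝ H), ← inv_pow, ← Measure.integral_comp_smul]
    refine integral_congr_ae (.of_forall fun y => ?_)
    simp only [midpointProduct]
    rw [mul_comm]
    congr 3
    module
  simp only [hslice]
  rw [integral_smul, Measure.integral_comp_smul volume fun x => ∫ s, conj (g (-(s - x))) * f s,
    integral_integral_window_mul (k := fun t => conj (g (-t)))
      (Complex.conjLIE.integrable_comp_iff.2 hg.comp_neg) hf,
    integral_neg_eq_self fun t => conj (g t), integral_conj, smul_smul, abs_inv,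
    mul_inv_cancel₀ (by positivity), one_smul, mul_comm]

theorem fourier_fourierChar_smul_gaussianWindow_sub {b : ℝ} (hb : 0 < b) (c β w : H) :
    𝓕 (fun ξ => Real.fourierChar (-inner ℝ ξ β) • (gaussianWindow b (ξ - c) : ℂ)) w =
      Real.fourierChar (-inner ℝ c (w + β)) • ((Real.pi / b : ℂ) ^ (finrank ℝ H / 2 : ℂ) *
        gaussianWindow (Real.pi ^ 2 / b) (w + β)) := by
  have hgauss : 𝓕 (fun ξ : H => (gaussianWindow b ξ : ℂ)) (w + β) =
      (Real.pi / b : ℂ) ^ (finrank ℝ H / 2 : ℂ) * gaussianWindow (Real.pi ^ 2 / b) (w + β) := by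
    have h := fourier_gaussian_innerProductSpace (V := H) (b := b) (by simpa) (w + β)
    simp only [gaussianWindow, Complex.ofReal_exp]
    push_cast
    rw [h]
    congr 2
    ring
  rw [← hgauss, Real.fourier_eq, Real.fourier_eq, ← integral_add_right_eq_self _ c,
    Circle.smul_def, ← integral_smul]
  refine integral_congr_ae (.of_forall fun ξ => ?_)
  simp only [add_sub_cancel_right, ← Circle.smul_def, smul_smul, ← AddChar.map_add_eq_mul]
  congr 2
  simp only [inner_add_left, inner_add_right]
  ring

theorem integrable_gaborIntegrand (u : SchwartzMap H ℂ) (p q : H) :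
    Integrable (gaborIntegrand u p q) := by
  obtain ⟨f, hf⟩ := exists_schwartzMap_eq_window_smul
    (hasTemperateGrowth_gaussianWindow Real.pi_nonneg) u p
  have hconv := (Real.fourierIntegral_convergent_iff (μ := volume) q).2 f.integrable
  rwa [hf] at hconv

theorem integral_wignerTransform_mul_gaussianWindow (u v : SchwartzMap H ℂ) (x κ β : H) :
    ∫ ξ, wignerTransform u v x ξ *
        Real.fourierChar (-inner ℝ ξ β) • (gaussianWindow (2 * Real.pi) (ξ - κ) : ℂ) =
      2⁻¹ ^ (finrank ℝ H / 2 : ℂ) * ∫ y, midpointProduct u v x y *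
        Real.fourierChar (-inner ℝ κ (y + β)) • (gaussianWindow (Real.pi / 2) (y + β) : ℂ) := by
  have hwindow : Integrable fun ξ : H =>
      Real.fourierChar (-inner ℝ ξ β) • (gaussianWindow (2 * Real.pi) (ξ - κ) : ℂ) :=
    (Real.fourierIntegral_convergent_iff β).2
      ((integrable_gaussianWindow Real.two_pi_pos).comp_sub_right κ).ofReal
  have hpi : (Real.pi / (2 * Real.pi : ℝ) : ℂ) = 2⁻¹ := by
    push_cast
    field_simp
  simp only [wignerTransform]
  rw [integral_fourier_mul_eq_integral_mul_fourier (integrable_midpointProduct u v x) hwindow,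
    ← integral_const_mul]
  refine integral_congr_ae (.of_forall fun y => ?_)
  simp only [fourier_fourierChar_smul_gaussianWindow_sub Real.two_pi_pos]
  rw [hpi, show Real.pi ^ 2 / (2 * Real.pi) = Real.pi / 2 by field_simp, mul_smul_comm,
    mul_smul_comm, mul_left_comm, mul_smul_comm]

theorem integral_gaussianWindow_mul_wignerTransform (u v : SchwartzMap H ℂ) (x c κ α β : H) :
    ∫ ξ, Real.fourierChar (-inner ℝ x α) • (gaussianWindow (2 * Real.pi) (x - c) : ℂ) *
        (wignerTransform u v x ξ *
          Real.fourierChar (-inner ℝ ξ β) • (gaussianWindow (2 * Real.pi) (ξ - κ) : ℂ)) =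
      2⁻¹ ^ (finrank ℝ H / 2 : ℂ) * Real.fourierChar (-inner ℝ κ β) • ∫ y, midpointProduct
        (gaborIntegrand u (c - (2⁻¹ : ℝ) • β) (κ + (2⁻¹ : ℝ) • α))
        (gaborIntegrand v (c + (2⁻¹ : ℝ) • β) (κ - (2⁻¹ : ℝ) • α)) x y := by
  rw [integral_const_mul, integral_wignerTransform_mul_gaussianWindow, mul_left_comm,
    ← integral_const_mul]
  simp only [gaussianWindow_mul_midpointProduct_eq]
  simp only [Circle.smul_def, integral_smul]

theorem integral_withLp_prod {E : Type*} [NormedAddCommGroup E] [NormedSpace ℝ E]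
    {F : WithLp 2 (H × H) → E} (hF : Integrable F) :
    ∫ z, F z = ∫ x, ∫ y, F (WithLp.toLp 2 (x, y)) := by
  have hmp := WithLp.volume_preserving_toLp H H
  rw [← hmp.integral_comp (MeasurableEquiv.toLp 2 (H × H)).measurableEmbedding]
  exact integral_prod _ (hmp.integrable_comp_of_integrable hF)

theorem shortTimeFourier_wignerTransform (u v : SchwartzMap H ℂ) (z ζ : WithLp 2 (H × H)) :
    shortTimeFourier (gaussianWindow (2 * Real.pi))
        (fun z : WithLp 2 (H × H) => wignerTransform u v z.fst z.snd) z ζ =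
      2⁻¹ ^ (finrank ℝ H / 2 : ℂ) * Real.fourierChar (-inner ℝ z.snd ζ.snd) •
        (shortTimeFourier (gaussianWindow Real.pi) u (z.fst - (2⁻¹ : ℝ) • ζ.snd)
            (z.snd + (2⁻¹ : ℝ) • ζ.fst) *
          conj (shortTimeFourier (gaussianWindow Real.pi) v (z.fst + (2⁻¹ : ℝ) • ζ.snd)
            (z.snd - (2⁻¹ : ℝ) • ζ.fst))) := by
  have hsplit : ∀ x ξ : H, Real.fourierChar (-inner ℝ (WithLp.toLp 2 (x, ξ)) ζ) •
      gaussianWindow (2 * Real.pi) (WithLp.toLp 2 (x, ξ) - z) • wignerTransform u v x ξ =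
        Real.fourierChar (-inner ℝ x ζ.fst) •
            (gaussianWindow (2 * Real.pi) (x - z.fst) : ℂ) *
          (wignerTransform u v x ξ * Real.fourierChar (-inner ℝ ξ ζ.snd) •
            (gaussianWindow (2 * Real.pi) (ξ - z.snd) : ℂ)) := fun x ξ => by
    have hinner : inner ℝ (WithLp.toLp 2 (x, ξ)) ζ = inner ℝ x ζ.fst + inner ℝ ξ ζ.snd :=
      WithLp.prod_inner_apply _ _
    simp only [hinner, gaussianWindow, WithLp.prod_norm_sq_eq_of_L2, neg_add, mul_add,
      Real.exp_add, AddChar.map_add_eq_mul, WithLp.sub_fst, WithLp.sub_snd, WithLp.toLp_fst,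
      WithLp.toLp_snd, Circle.smul_def, Circle.coe_mul, Complex.real_smul, Complex.ofReal_mul,
      smul_eq_mul]
    ring
  rw [shortTimeFourier, Real.fourier_eq, integral_withLp_prod
    ((Real.fourierIntegral_convergent_iff ζ).2 (integrable_window_smul_of_norm_le
      (continuous_gaussianWindow _) (norm_gaussianWindow_le_one Real.two_pi_pos.le)
      (integrable_wignerTransform_withLp u v) z))]
  simp only [WithLp.toLp_fst, WithLp.toLp_snd, hsplit,
    integral_gaussianWindow_mul_wignerTransform]
  rw [integral_const_mul]
  simp only [Circle.smul_def, integral_smul]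
  rw [integral_integral_midpointProduct (integrable_gaborIntegrand u _ _)
    (integrable_gaborIntegrand v _ _)]
  simp only [shortTimeFourier, Real.fourier_eq, gaborIntegrand]

end ProductFormula

section CalderonVaillancourt

open Module

variable {V : Type*} [NormedAddCommGroup V] [InnerProductSpace ℝ V] [FiniteDimensional ℝ V]
  [MeasurableSpace V] [BorelSpace V]

theorem integral_norm_mul_norm_comp_add_le {E : Type*} [NormedAddCommGroup E] {f h : V → E}
    (hf : MemLp f 2) (hh : MemLp h 2) (b c : V) :
    ∫ z, ‖f (z + b)‖ * ‖h (z + c)‖ ≤ √(∫ z, ‖f z‖ ^ 2) * √(∫ z, ‖h z‖ ^ 2) := by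
  have hholder := integral_mul_norm_le_Lp_mul_Lq Real.HolderConjugate.two_two
    (f := fun z => f (z + b)) (g := fun z => h (z + c))
    (by simpa using! hf.comp_measurePreserving (measurePreserving_add_right volume b))
    (by simpa using! hh.comp_measurePreserving (measurePreserving_add_right volume c))
  simp only [Real.rpow_two, ← Real.sqrt_eq_rpow] at hholder
  rwa [integral_add_right_eq_self (fun z => ‖f z‖ ^ 2),
    integral_add_right_eq_self (fun z => ‖h z‖ ^ 2)] at hholder

theorem integral_norm_shortTimeFourier_wignerTransform_le (u v : SchwartzMap V ℂ)
    (ζ : WithLp 2 (V × V)) :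
    ∫ z, ‖shortTimeFourier (gaussianWindow (2 * Real.pi))
        (fun z : WithLp 2 (V × V) => wignerTransform u v z.fst z.snd) z ζ‖ ≤
      ‖(2⁻¹ : ℂ) ^ (finrank ℝ V / 2 : ℂ)‖ * (∫ z : V, gaussianWindow Real.pi z ^ 2) *
        (√(∫ z, ‖u z‖ ^ 2) * √(∫ z, ‖v z‖ ^ 2)) := by
  have hg : (gaussianWindow Real.pi : V → ℝ).HasTemperateGrowth :=
    hasTemperateGrowth_gaussianWindow Real.pi_nonneg
  have hg₂ : Integrable fun z : V => gaussianWindow Real.pi z ^ 2 := by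
    simpa only [gaussianWindow_sq] using integrable_gaussianWindow Real.two_pi_pos
  have hG₀ : 0 ≤ ∫ z : V, gaussianWindow Real.pi z ^ 2 := integral_nonneg fun z => sq_nonneg _
  let b : WithLp 2 (V × V) := WithLp.toLp 2 (-((2⁻¹ : ℝ) • ζ.snd), (2⁻¹ : ℝ) • ζ.fst)
  have hcs := integral_norm_mul_norm_comp_add_le (memLp_shortTimeFourier_withLp hg hg₂ u)
    (memLp_shortTimeFourier_withLp hg hg₂ v) b (-b)
  rw [integral_norm_shortTimeFourier_sq_withLp hg hg₂,
    integral_norm_shortTimeFourier_sq_withLp hg hg₂, Real.sqrt_mul hG₀, Real.sqrt_mul hG₀,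
    mul_mul_mul_comm, Real.mul_self_sqrt hG₀] at hcs
  rw [mul_assoc]
  refine le_trans (le_of_eq ?_) (mul_le_mul_of_nonneg_left hcs (norm_nonneg _))
  rw [← integral_const_mul]
  simp only [shortTimeFourier_wignerTransform, norm_mul, Circle.norm_smul, RCLike.norm_conj, b,
    WithLp.add_fst, WithLp.add_snd, WithLp.sub_fst, WithLp.sub_snd, WithLp.toLp_fst,
    WithLp.toLp_snd, ← sub_eq_add_neg, sub_neg_eq_add]

theorem exists_norm_integral_mul_wignerTransform_le {N : ℕ} (hN : 2 * finrank ℝ V < N)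
    {a : WithLp 2 (V × V) → ℂ} (ha : ContDiff ℝ N a)
    (hbd : ∀ k ≤ N, ∃ M : ℝ, ∀ z, ‖iteratedFDeriv ℝ k a z‖ ≤ M) :
    ∃ C : ℝ, ∀ u v : SchwartzMap V ℂ,
      ‖∫ z : WithLp 2 (V × V), a z * wignerTransform u v z.fst z.snd‖ ≤
        C * (√(∫ z, ‖u z‖ ^ 2) * √(∫ z, ‖v z‖ ^ 2)) := by
  have hdim : finrank ℝ (WithLp 2 (V × V)) = 2 * finrank ℝ V := by
    rw [(WithLp.linearEquiv 2 ℝ (V × V)).finrank_eq, finrank_prod, two_mul]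
  obtain ⟨C, hC⟩ := exists_norm_integral_mul_le_of_shortTimeFourier (hdim ▸ hN) ha hbd
    (continuous_gaussianWindow (2 * Real.pi)) (integrable_gaussianWindow Real.two_pi_pos)
    (gaussianWindow_pos _) ⟨1, norm_gaussianWindow_le_one Real.two_pi_pos.le⟩
  refine ⟨C * (‖(2⁻¹ : ℂ) ^ (finrank ℝ V / 2 : ℂ)‖ * ∫ z : V, gaussianWindow Real.pi z ^ 2),
    fun u v => ?_⟩
  rw [mul_assoc]
  exact hC _ (integrable_wignerTransform_withLp u v) _
    (integral_norm_shortTimeFourier_wignerTransform_le u v)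

end CalderonVaillancourt

section CoordinatePhaseSpace

open Module

theorem integral_prod_comp_smul_right {α W E : Type*} [MeasurableSpace α] {μ : Measure α}
    [SFinite μ] [NormedAddCommGroup W] [NormedSpace ℝ W] [FiniteDimensional ℝ W]
    [MeasurableSpace W] [BorelSpace W] {ν : Measure W} [ν.IsAddHaarMeasure]
    [NormedAddCommGroup E] [NormedSpace ℝ E] {c : ℝ} (hc : c ≠ 0) (f : α × W → E) :
    ∫ p, f (p.1, c • p.2) ∂(μ.prod ν) =
      |(c ^ finrank ℝ W)⁻¹| • ∫ p, f p ∂(μ.prod ν) := by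
  have hmap : (μ.prod ν).map (Prod.map id (c • ·)) =
      ENNReal.ofReal |(c ^ finrank ℝ W)⁻¹| • μ.prod ν := by
    rw [← Measure.map_prod_map μ ν measurable_id (measurable_const_smul c), Measure.map_id,
      Measure.map_addHaar_smul ν hc, Measure.prod_smul_right]
  have hemb : MeasurableEmbedding (Prod.map id (c • ·) : α × W → α × W) :=
    MeasurableEmbedding.id.prodMap (MeasurableEquiv.smul₀ c hc).measurableEmbedding
  calc ∫ p, f (p.1, c • p.2) ∂(μ.prod ν)
      = ∫ p, f p ∂((μ.prod ν).map (Prod.map id (c • ·))) := (hemb.integral_map f).symm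
    _ = _ := by rw [hmap, integral_smul_measure, ENNReal.toReal_ofReal (abs_nonneg _)]

variable {n : ℕ}

/-- The linear map `(x, ξ) ↦ (x, 2πξ)` from Euclidean phase space, with the frequencies of `𝓕`, to
coordinate phase space, with the frequencies of the kernel `exp (-i (y | ξ))` of `wigner`. -/
def angularPhaseSpace (n : ℕ) :
    WithLp 2 (EuclideanSpace ℝ (Fin n) × EuclideanSpace ℝ (Fin n)) →L[ℝ]
      (Fin n → ℝ) × (Fin n → ℝ) :=
  ((EuclideanSpace.equiv (Fin n) ℝ : EuclideanSpace ℝ (Fin n) →L[ℝ] Fin n → ℝ).prodMap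
    ((2 * Real.pi) • (EuclideanSpace.equiv (Fin n) ℝ : EuclideanSpace ℝ (Fin n) →L[ℝ] Fin n → ℝ)))
    ∘L (WithLp.prodContinuousLinearEquiv 2 ℝ (EuclideanSpace ℝ (Fin n))
      (EuclideanSpace ℝ (Fin n)) : _ →L[ℝ] _)

/-- A Schwartz function on `ℝⁿ` with the supremum norm, regarded as one on Euclidean space. -/
def euclideanSchwartz (u : SchwartzMap (Fin n → ℝ) ℂ) : SchwartzMap (EuclideanSpace ℝ (Fin n)) ℂ :=
  SchwartzMap.compCLMOfContinuousLinearEquiv ℂ (EuclideanSpace.equiv (Fin n) ℝ) u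

theorem integral_comp_ofLp {E : Type*} [NormedAddCommGroup E] [NormedSpace ℝ E]
    (f : (Fin n → ℝ) → E) : ∫ x : EuclideanSpace ℝ (Fin n), f x.ofLp = ∫ x, f x :=
  (PiLp.volume_preserving_ofLp (Fin n)).integral_comp
    (MeasurableEquiv.toLp 2 (Fin n → ℝ)).symm.measurableEmbedding f

theorem integral_comp_angularPhaseSpace {E : Type*} [NormedAddCommGroup E] [NormedSpace ℝ E]
    (f : (Fin n → ℝ) × (Fin n → ℝ) → E) :
    ∫ z, f (angularPhaseSpace n z) = ((2 * Real.pi) ^ n)⁻¹ • ∫ p, f p := by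
  have hofLp := PiLp.volume_preserving_ofLp (Fin n)
  have hemb := (MeasurableEquiv.toLp 2 (Fin n → ℝ)).symm.measurableEmbedding
  calc ∫ z, f (angularPhaseSpace n z)
      = ∫ p : EuclideanSpace ℝ (Fin n) × EuclideanSpace ℝ (Fin n),
          f (p.1.ofLp, (2 * Real.pi) • p.2.ofLp) :=
        (WithLp.volume_preserving_ofLp _ _).integral_comp
          (MeasurableEquiv.toLp 2 (_ × _)).symm.measurableEmbedding
          fun p : EuclideanSpace ℝ (Fin n) × EuclideanSpace ℝ (Fin n) =>
            f (p.1.ofLp, (2 * Real.pi) • p.2.ofLp)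
    _ = ∫ p : (Fin n → ℝ) × (Fin n → ℝ), f (p.1, (2 * Real.pi) • p.2) :=
        (hofLp.prod hofLp).integral_comp (hemb.prodMap hemb)
          fun p => f (p.1, (2 * Real.pi) • p.2)
    _ = _ := by
        rw [Measure.volume_eq_prod, integral_prod_comp_smul_right Real.two_pi_pos.ne',
          finrank_fin_fun, abs_of_pos (by positivity)]

theorem wigner_angularPhaseSpace (u v : SchwartzMap (Fin n → ℝ) ℂ)
    (z : WithLp 2 (EuclideanSpace ℝ (Fin n) × EuclideanSpace ℝ (Fin n))) :
    wigner u v (angularPhaseSpace n z) = ((2 * Real.pi) ^ n)⁻¹ •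
      wignerTransform (euclideanSchwartz u) (euclideanSchwartz v) z.fst z.snd := by
  have hdot (y ξ : EuclideanSpace ℝ (Fin n)) :
      dotn y.ofLp ((2 * Real.pi) • ξ.ofLp) = 2 * Real.pi * inner ℝ y ξ := by
    simp only [dotn, PiLp.inner_apply, RCLike.inner_apply, conj_trivial, Pi.smul_apply,
      smul_eq_mul, Finset.mul_sum]
    exact Finset.sum_congr rfl fun i _ => by ring
  rw [wigner, ← integral_comp_ofLp, wignerTransform, Real.fourier_eq, Complex.real_smul]
  congr 2
  ext y
  rw [midpointProduct, Circle.smul_def, Real.fourierChar_apply, smul_eq_mul, mul_comm, neg_smul,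
    ← sub_eq_add_neg]
  congr 2
  rw [show (angularPhaseSpace n z).2 = (2 * Real.pi) • z.snd.ofLp from rfl, hdot]
  push_cast
  ring

theorem integral_mul_wigner (a : (Fin n → ℝ) × (Fin n → ℝ) → ℂ)
    (u v : SchwartzMap (Fin n → ℝ) ℂ) :
    ∫ z, a z * wigner u v z = ∫ z, a (angularPhaseSpace n z) *
      wignerTransform (euclideanSchwartz u) (euclideanSchwartz v) z.fst z.snd := by
  have hpi : (2 * Real.pi) ^ n ≠ 0 := by positivity
  rw [← smul_right_injective _ (inv_ne_zero hpi) |>.eq_iff,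
    ← integral_comp_angularPhaseSpace fun z => a z * wigner u v z, ← integral_smul]
  simp only [wigner_angularPhaseSpace, mul_smul_comm]

theorem exists_norm_iteratedFDeriv_comp_angularPhaseSpace_le {k : ℕ}
    {a : (Fin n → ℝ) × (Fin n → ℝ) → ℂ} (ha : ContDiff ℝ k a)
    (hbd : ∀ L : List (Fin n ⊕ Fin n), L.length = k → ∃ M : ℝ, ∀ z, ‖pDerivList L a z‖ ≤ M) :
    ∃ M : ℝ, ∀ z, ‖iteratedFDeriv ℝ k (fun z => a (angularPhaseSpace n z)) z‖ ≤ M := by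
  obtain ⟨M, hM⟩ := exists_norm_iteratedFDeriv_le_of_pDerivList ha hbd
  refine ⟨‖angularPhaseSpace n‖ ^ k * M, fun z => ?_⟩
  have hcomp := norm_iteratedFDeriv_comp_const_add_clm_le ha 0 (angularPhaseSpace n) z
  simp only [zero_add] at hcomp
  exact hcomp.trans (by gcongr; exact hM _)

theorem calderon_vaillancourt_general (n : ℕ) (a : (Fin n → ℝ) × (Fin n → ℝ) → ℂ)
    (ha : ContDiff ℝ (2 * n + 1 : ℕ) a)
    (hbd : ∀ L : List (Fin n ⊕ Fin n), L.length ≤ 2 * n + 1 →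
      ∃ M : ℝ, ∀ z, ‖pDerivList L a z‖ ≤ M) :
    ∃ C > (0 : ℝ), ∀ u v : SchwartzMap (Fin n → ℝ) ℂ,
      ‖∫ z : (Fin n → ℝ) × (Fin n → ℝ), a z * wigner u v z‖ ≤
        C * Real.sqrt (∫ x : Fin n → ℝ, ‖u x‖ ^ 2) *
          Real.sqrt (∫ x : Fin n → ℝ, ‖v x‖ ^ 2) := by
  obtain ⟨C, hC⟩ := exists_norm_integral_mul_wignerTransform_le (N := 2 * n + 1)
    (by rw [finrank_euclideanSpace_fin]; exact lt_add_one _)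
    (ha.comp (angularPhaseSpace n).contDiff)
    fun k hk => exists_norm_iteratedFDeriv_comp_angularPhaseSpace_le
      (ha.of_le (by exact_mod_cast hk)) fun L hL => hbd L (hL.trans_le hk)
  refine ⟨max C 1, by positivity, fun u v => ?_⟩
  have hnorm (w : SchwartzMap (Fin n → ℝ) ℂ) :
      ∫ x, ‖euclideanSchwartz w x‖ ^ 2 = ∫ x, ‖w x‖ ^ 2 := integral_comp_ofLp fun x => ‖w x‖ ^ 2
  calc ‖∫ z, a z * wigner u v z‖
      ≤ C * (√(∫ x, ‖u x‖ ^ 2) * √(∫ x, ‖v x‖ ^ 2)) := by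
        rw [integral_mul_wigner, ← hnorm u, ← hnorm v]
        exact hC (euclideanSchwartz u) (euclideanSchwartz v)
    _ ≤ max C 1 * √(∫ x, ‖u x‖ ^ 2) * √(∫ x, ‖v x‖ ^ 2) := by
        rw [mul_assoc]
        gcongr
        exact le_max_left C 1

end CoordinatePhaseSpace

/-- Calderón–Vaillancourt theorem (Weyl quantization form): if `a : ℝ^{2n} → ℂ`
is smooth and all its partial derivatives (including `a` itself) are bounded,
then the Weyl operator `Op(a)` is bounded on `L²(ℝⁿ)`:
`|∫ a · W(u,v)| ≤ C ‖u‖_{L²} ‖v‖_{L²}` for all Schwartz `u, v`. -/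
theorem calderon_vaillancourt (n : ℕ) (hn : 1 ≤ n)
    (a : (Fin n → ℝ) × (Fin n → ℝ) → ℂ) (ha : ContDiff ℝ (⊤ : ℕ∞) a)
    (hbd : ∀ L : List (Fin n ⊕ Fin n), ∃ M : ℝ, ∀ z, ‖pDerivList L a z‖ ≤ M) :
    ∃ C > (0 : ℝ), ∀ u v : SchwartzMap (Fin n → ℝ) ℂ,
      ‖∫ z : (Fin n → ℝ) × (Fin n → ℝ), a z * wigner u v z‖ ≤
        C * Real.sqrt (∫ x : Fin n → ℝ, ‖u x‖ ^ 2) *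
          Real.sqrt (∫ x : Fin n → ℝ, ‖v x‖ ^ 2) :=
  calderon_vaillancourt_general n a (contDiff_infty.1 ha _) fun L _ => hbd L
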